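/- Rewriting of the cycles of Lukyanov's operator Λ₋₁(y): fix n ≥ 2 and an integer l ≥ 0. Then Asym( e₁ · ∑_{k=0}^{n−1} (−1)^k · h_{l−2k} · ∏_{a=1}^{k} A_a^{2n+1−2a} · ∏_{a=k+1}^{n−1} A_a^{2n−1−2a} − ∑_{k=0}^{n−1} e_{2k+1}·h_{l−2k} · ∏_{a=1}^{n−1} A_a^{2n−1−2a} ) ∈ K, where h_j denotes the complete homogeneous symmetric polynomial of degree j in B₁,…,B_{2n} (with h_j := 0 for j < 0) and e_k the k-th elementary symmetric polynomial in B₁,…,B_{2n}. -/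

import Mathlib

open Finset Equiv

/-- The polynomial ring `ℂ[A₁,…,A_{n−1}, B₁,…,B_{2n}]`. -/
abbrev PolyRing (n : ℕ) := MvPolynomial (Fin (n - 1) ⊕ Fin (2 * n)) ℂ

/-- The field `F = ℂ(A₁,…,A_{n−1}, B₁,…,B_{2n})` of rational functions. -/
abbrev RatField (n : ℕ) := FractionRing (PolyRing n)

/-- The variable `A_a` (indexed from `0`) inside `F`. -/
noncomputable def Av (n : ℕ) (a : Fin (n - 1)) : RatField n :=
  algebraMap (PolyRing n) (RatField n) (MvPolynomial.X (Sum.inl a))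

/-- The variable `B_j` (indexed from `0`) inside `F`. -/
noncomputable def Bv (n : ℕ) (j : Fin (2 * n)) : RatField n :=
  algebraMap (PolyRing n) (RatField n) (MvPolynomial.X (Sum.inr j))

/-- The field automorphism of `F` substituting `A_a ↦ A_{σ(a)}` (fixing the `B`'s). -/
noncomputable def permA (n : ℕ) (σ : Equiv.Perm (Fin (n - 1))) :
    RatField n ≃+* RatField n :=
  IsFractionRing.ringEquivOfRingEquiv
    ((MvPolynomial.renameEquiv ℂ (Equiv.sumCongr σ (Equiv.refl (Fin (2 * n))))).toRingEquiv)

/-- Antisymmetrization over the `A`-variables: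
`Asym f := ∑_{σ ∈ S_{n−1}} sgn(σ)·f(A_{σ(1)},…,A_{σ(n−1)})`. -/
noncomputable def Asym (n : ℕ) (x : RatField n) : RatField n :=
  ∑ σ : Equiv.Perm (Fin (n - 1)), ((Equiv.Perm.sign σ : ℤ) : RatField n) * permA n σ x

/-- `Θ̂₊(x) := ∏_{j=1}^{2n}(1 + x·B_j⁻¹)`. -/
noncomputable def ThetaP (n : ℕ) (x : RatField n) : RatField n :=
  ∏ j, (1 + x * (Bv n j)⁻¹)

/-- `Θ̂₋(x) := ∏_{j=1}^{2n}(1 − x·B_j⁻¹)`. -/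
noncomputable def ThetaM (n : ℕ) (x : RatField n) : RatField n :=
  ∏ j, (1 - x * (Bv n j)⁻¹)

/-- `Ξ̂¹(x) := Θ̂₊(x) − Θ̂₋(x)`. -/
noncomputable def Xi1 (n : ℕ) (x : RatField n) : RatField n :=
  ThetaP n x - ThetaM n x

/-- `Ξ̂²(x,y) := (Θ̂₊(x)Θ̂₊(y) − Θ̂₋(x)Θ̂₋(y))·(x−y)/(x+y) + Θ̂₊(x)Θ̂₋(y) − Θ̂₋(x)Θ̂₊(y)`. -/
noncomputable def Xi2 (n : ℕ) (x y : RatField n) : RatField n :=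
  (ThetaP n x * ThetaP n y - ThetaM n x * ThetaM n y) * (x - y) / (x + y) +
    ThetaP n x * ThetaM n y - ThetaM n x * ThetaP n y

/-- The subfield `𝔹 = ℂ(B₁,…,B_{2n}) ⊆ F`. -/
noncomputable def BField (n : ℕ) : Subfield (RatField n) :=
  Subfield.closure
    (Set.range (fun c : ℂ => algebraMap (PolyRing n) (RatField n) (MvPolynomial.C c)) ∪
      Set.range (Bv n))

/-- The `𝔹`-submodule `K ⊆ F` spanned by the antisymmetrized deformed cycles
`Asym(Ξ̂¹(A₁)·∏_{a=2}^{n−1} A_a^{r_a})` and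
`Asym(Ξ̂²(A₁,A₂)·∏_{a=3}^{n−1} A_a^{r_a})` with `0 ≤ r_a ≤ 2n−1`. -/
noncomputable def Kspan (n : ℕ) : Submodule (BField n) (RatField n) :=
  Submodule.span (BField n)
    ({x | ∃ (h : 0 < n - 1) (r : Fin (n - 1) → ℕ), (∀ a, r a ≤ 2 * n - 1) ∧
        x = Asym n (Xi1 n (Av n ⟨0, h⟩) *
          ∏ a ∈ Finset.univ.filter (fun a : Fin (n - 1) => 0 < (a : ℕ)),
            (Av n a) ^ (r a))} ∪
     {x | ∃ (h : 1 < n - 1) (r : Fin (n - 1) → ℕ), (∀ a, r a ≤ 2 * n - 1) ∧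
        x = Asym n (Xi2 n (Av n ⟨0, by omega⟩) (Av n ⟨1, h⟩) *
          ∏ a ∈ Finset.univ.filter (fun a : Fin (n - 1) => 1 < (a : ℕ)),
            (Av n a) ^ (r a))})

/-- `e₁ = ∑_j B_j`. -/
noncomputable def eOne (n : ℕ) : RatField n := ∑ j, Bv n j

/-- `ē₁ = ∑_j B_j⁻¹`. -/
noncomputable def eBarOne (n : ℕ) : RatField n := ∑ j, (Bv n j)⁻¹

/-- `Π = ∏_j B_j`. -/
noncomputable def PiB (n : ℕ) : RatField n := ∏ j, Bv n j

/-- The cycle `G_{μν} = (ē₁ − (−1)^ν·e₁)·((−1)^{μ+n}·Π·∏_{a=1}^{n−1} A_a^{2a−1}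
  + ∏_{a=1}^{n−1} A_a^{2a+1})` of the energy–momentum tensor. -/
noncomputable def Gcyc (n : ℕ) (μ ν : Fin 2) : RatField n :=
  (eBarOne n - (-1 : RatField n) ^ (ν : ℕ) * eOne n) *
    ((-1 : RatField n) ^ ((μ : ℕ) + n) * PiB n *
        (∏ a : Fin (n - 1), (Av n a) ^ (2 * (a : ℕ) + 1)) +
      ∏ a : Fin (n - 1), (Av n a) ^ (2 * (a : ℕ) + 3))

/-- The complete homogeneous symmetric polynomial `h_j` in `B₁,…,B_{2n}`,
viewed inside `F`. -/
noncomputable def hB (n j : ℕ) : RatField n :=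
  algebraMap (PolyRing n) (RatField n)
    (MvPolynomial.rename Sum.inr (MvPolynomial.hsymm (Fin (2 * n)) ℂ j))

/-- `h_j` for an integer index `j`, with `h_j = 0` for `j < 0`. -/
noncomputable def hBInt (n : ℕ) (j : ℤ) : RatField n :=
  if 0 ≤ j then hB n j.toNat else 0

/-- The elementary symmetric polynomial `e_k` in `B₁,…,B_{2n}`, viewed
inside `F`. -/
noncomputable def eB (n k : ℕ) : RatField n :=
  algebraMap (PolyRing n) (RatField n)
    (MvPolynomial.rename Sum.inr (MvPolynomial.esymm (Fin (2 * n)) ℂ k))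

/-!
Write `n = N + 1` and let `V` be the `N × n` matrix of odd powers `A_i^{2n - 1 - 2j}`, `0 ≤ j < n`.
The `k`-th monomial antisymmetrizes to the maximal minor `M_k` of `V` that omits column `k`.
Up to the factor `2 / ∏ B_j`, the values `Ξ̂¹(A_i)` form the vector `V e`, where
`e = (e₁, e₃, …, e_{2n-1})`. For `k ≥ 1`, replacing the first column of `M_k` by `V e` therefore
gives an element of `K`, and expanding that column linearly only the terms of `e₁` and `e_{2k+1}`
survive: the determinant is `e₁ M_k + (-1)^{k-1} e_{2k+1} M_0`. So `(-1)^k e₁ M_k ≡ e_{2k+1} M_0`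
modulo `K` for every `k`, and the theorem is the `𝔹`-combination of these congruences with
coefficients `h_{l-2k}`.
-/

section Minors

variable {R : Type*} [CommRing R] {N : ℕ} [NeZero N]

lemma update_succAbove_cycleRange (k j : Fin N) :
    Function.update k.succ.succAbove 0 k.succ (k.cycleRange j) = j.succ := by
  rcases eq_or_ne j k with rfl | hjk
  · rw [Fin.cycleRange_self, Function.update_self]
  · have hne : k.cycleRange j ≠ 0 := fun h =>
      hjk (k.cycleRange.injective (h.trans k.cycleRange_self.symm))
    rw [Function.update_of_ne hne, Fin.succAbove_cycleRange,
      swap_apply_of_ne_of_ne (Fin.succ_ne_zero j) (by simpa using hjk)]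

lemma det_updateCol_submatrix_succAbove (V : Matrix (Fin N) (Fin (N + 1)) R) (k : Fin N) :
    ((V.submatrix id k.succ.succAbove).updateCol 0 (V.col k.succ)).det =
      (-1) ^ (k : ℕ) * (V.submatrix id Fin.succ).det := by
  have hupdate : (V.submatrix id k.succ.succAbove).updateCol 0 (V.col k.succ) =
      V.submatrix id (Function.update k.succ.succAbove 0 k.succ) := by
    ext i j
    rcases eq_or_ne j 0 with rfl | hj
    · simp
    · simp [hj]
  have hcycle : V.submatrix id Fin.succ =
      (V.submatrix id (Function.update k.succ.succAbove 0 k.succ)).submatrix id k.cycleRange := by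
    ext i j
    simp [update_succAbove_cycleRange]
  rw [hupdate, hcycle, Matrix.det_permute', Fin.sign_cycleRange, ← mul_assoc]
  simp [← mul_pow]

lemma det_updateCol_submatrix_succAbove_mulVec (V : Matrix (Fin N) (Fin (N + 1)) R)
    (c : Fin (N + 1) → R) (k : Fin N) :
    ((V.submatrix id k.succ.succAbove).updateCol 0 (V.mulVec c)).det =
      c 0 * (V.submatrix id k.succ.succAbove).det +
        (-1) ^ (k : ℕ) * (c k.succ * (V.submatrix id Fin.succ).det) := by
  set M := V.submatrix id k.succ.succAbove
  have hsplit : V.mulVec c =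
      c k.succ • V.col k.succ + fun i => ∑ j, c (k.succ.succAbove j) • M i j := by
    ext i
    simp [M, Matrix.mulVec, dotProduct, Fin.sum_univ_succAbove _ k.succ, mul_comm]
  rw [hsplit, Matrix.det_updateCol_add, Matrix.det_updateCol_smul, Matrix.det_updateCol_sum,
    det_updateCol_submatrix_succAbove, Fin.succAbove_ne_zero_zero (Fin.succ_ne_zero k),
    smul_eq_mul]
  ring

end Minors

section OddPart

lemma sum_range_two_mul {M : Type*} [AddCommMonoid M] (f : ℕ → M) (n : ℕ) :
    ∑ j ∈ range (2 * n), f j = ∑ m ∈ range n, (f (2 * m) + f (2 * m + 1)) := by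
  induction n with
  | zero => simp
  | succ n ih => rw [mul_add_one, sum_range_succ, sum_range_succ, ih, sum_range_succ, add_assoc]

variable {σ S : Type*} [Fintype σ]

lemma prod_add_eq_sum_aeval_esymm (R : Type*) [CommSemiring R] [CommSemiring S] [Algebra R S]
    (b : σ → S) (x : S) :
    ∏ i, (x + b i) = ∑ j ∈ range (Fintype.card σ + 1),
      MvPolynomial.aeval b (MvPolynomial.esymm σ R j) * x ^ (Fintype.card σ - j) := by
  have h := congrArg (Polynomial.eval₂ (MvPolynomial.aeval b).toRingHom x)
    (MvPolynomial.prod_C_add_X_eq_sum_esymm R σ)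
  rw [Polynomial.eval₂_finsetProd, Polynomial.eval₂_finsetSum] at h
  simpa [Polynomial.eval₂_mul, Polynomial.eval₂_pow] using h

lemma prod_add_sub_prod_neg_add (R : Type*) [CommSemiring R] [CommRing S] [Algebra R S] {n : ℕ}
    (hσ : Fintype.card σ = 2 * n) (b : σ → S) (x : S) :
    ∏ i, (x + b i) - ∏ i, (-x + b i) = 2 * ∑ m ∈ range n,
      MvPolynomial.aeval b (MvPolynomial.esymm σ R (2 * m + 1)) * x ^ (2 * n - 1 - 2 * m) := by
  rw [prod_add_eq_sum_aeval_esymm R, prod_add_eq_sum_aeval_esymm R, hσ, ← sum_sub_distrib,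
    sum_range_succ, sum_range_two_mul, mul_sum]
  simp only [Nat.sub_self, pow_zero, sub_self, add_zero]
  refine sum_congr rfl fun m hm => ?_
  have hm := mem_range.1 hm
  have heven : Even (2 * n - 2 * m) := ⟨n - m, by omega⟩
  have hodd : Odd (2 * n - (2 * m + 1)) := ⟨n - m - 1, by omega⟩
  rw [heven.neg_pow, hodd.neg_pow, show 2 * n - 1 - 2 * m = 2 * n - (2 * m + 1) by omega]
  ring

end OddPart

section Coefficients

variable (n : ℕ)

lemma algebraMap_rename_inr (p : MvPolynomial (Fin (2 * n)) ℂ) :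
    algebraMap (PolyRing n) (RatField n) (MvPolynomial.rename Sum.inr p) =
      MvPolynomial.aeval (Bv n) p := by
  induction p using MvPolynomial.induction_on with
  | C c => simp [IsScalarTower.algebraMap_apply ℂ (PolyRing n) (RatField n)]
  | add p q hp hq => simp [hp, hq]
  | mul_X p j hp => simp [hp, Bv]

lemma aeval_Bv_mem_BField (p : MvPolynomial (Fin (2 * n)) ℂ) :
    MvPolynomial.aeval (Bv n) p ∈ BField n := by
  induction p using MvPolynomial.induction_on with
  | C c =>
    rw [MvPolynomial.aeval_C]
    exact Subfield.subset_closure (Or.inl ⟨c, rfl⟩)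
  | add p q hp hq => simpa using add_mem hp hq
  | mul_X p j hp =>
    simpa using mul_mem hp (Subfield.subset_closure (Or.inr ⟨j, rfl⟩))

lemma eB_eq_aeval (k : ℕ) :
    eB n k = MvPolynomial.aeval (Bv n) (MvPolynomial.esymm (Fin (2 * n)) ℂ k) :=
  algebraMap_rename_inr n _

lemma eB_mem_BField (k : ℕ) : eB n k ∈ BField n :=
  eB_eq_aeval n k ▸ aeval_Bv_mem_BField n _

lemma hBInt_mem_BField (j : ℤ) : hBInt n j ∈ BField n := by
  unfold hBInt
  split_ifs
  · rw [hB, algebraMap_rename_inr]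
    exact aeval_Bv_mem_BField n _
  · exact zero_mem _

lemma PiB_mem_BField : PiB n ∈ BField n :=
  prod_mem fun j _ => Subfield.subset_closure (Or.inr ⟨j, rfl⟩)

lemma eOne_eq_eB_one : eOne n = eB n 1 := by
  simp [eOne, eB_eq_aeval, MvPolynomial.esymm_one]

lemma Bv_ne_zero (j : Fin (2 * n)) : Bv n j ≠ 0 := by
  simp [Bv]

lemma PiB_mul_ThetaP (x : RatField n) : PiB n * ThetaP n x = ∏ j, (x + Bv n j) := by
  rw [PiB, ThetaP, ← prod_mul_distrib]
  refine prod_congr rfl fun j _ => ?_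
  have := Bv_ne_zero n j
  field_simp
  ring

lemma ThetaM_eq_ThetaP_neg (x : RatField n) : ThetaM n x = ThetaP n (-x) := by
  simp only [ThetaM, ThetaP, neg_mul, sub_eq_add_neg]

lemma PiB_mul_Xi1 (x : RatField n) : PiB n * Xi1 n x =
    2 * ∑ m ∈ range n, eB n (2 * m + 1) * x ^ (2 * n - 1 - 2 * m) := by
  rw [Xi1, ThetaM_eq_ThetaP_neg, mul_sub, PiB_mul_ThetaP, PiB_mul_ThetaP]
  simp only [eB_eq_aeval]
  exact prod_add_sub_prod_neg_add ℂ (Fintype.card_fin _) (Bv n) x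

end Coefficients

section Antisymmetrization

variable {n : ℕ}

lemma permA_algebraMap (σ : Perm (Fin (n - 1))) (p : PolyRing n) :
    permA n σ (algebraMap _ _ p) = algebraMap (PolyRing n) (RatField n)
      (MvPolynomial.rename (sumCongr σ (Equiv.refl (Fin (2 * n)))) p) :=
  IsFractionRing.ringEquivOfRingEquiv_algebraMap _ _

lemma permA_Av (σ : Perm (Fin (n - 1))) (a : Fin (n - 1)) :
    permA n σ (Av n a) = Av n (σ a) := by
  simp [Av, permA_algebraMap]

lemma permA_Bv (σ : Perm (Fin (n - 1))) (j : Fin (2 * n)) : permA n σ (Bv n j) = Bv n j := by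
  simp [Bv, permA_algebraMap]

lemma permA_of_mem_BField (σ : Perm (Fin (n - 1))) {c : RatField n} (hc : c ∈ BField n) :
    permA n σ c = c := by
  have hle : BField n ≤ (permA n σ).toRingHom.eqLocusField (RingHom.id _) := by
    rw [BField, Subfield.closure_le]
    rintro _ (⟨a, rfl⟩ | ⟨j, rfl⟩)
    · change permA n σ _ = _
      simp [permA_algebraMap]
    · exact permA_Bv σ j
  exact hle hc

lemma permA_Xi1 (σ : Perm (Fin (n - 1))) (x : RatField n) :
    permA n σ (Xi1 n x) = Xi1 n (permA n σ x) := by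
  simp [Xi1, ThetaP, ThetaM, permA_Bv]

variable (n) in
/-- Antisymmetrization `Asym` as an endomorphism of the `𝔹`-vector space `F`. -/
noncomputable def asymLinearMap : RatField n →ₗ[BField n] RatField n where
  toFun := Asym n
  map_add' x y := by simp [Asym, mul_add, sum_add_distrib]
  map_smul' c x := by
    simp [Asym, Subfield.smul_def, permA_of_mem_BField, mul_sum, mul_left_comm]

lemma Asym_sub (x y : RatField n) : Asym n (x - y) = Asym n x - Asym n y :=
  map_sub (asymLinearMap n) x y

lemma Asym_sum {ι : Type*} (s : Finset ι) (f : ι → RatField n) :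
    Asym n (∑ i ∈ s, f i) = ∑ i ∈ s, Asym n (f i) :=
  map_sum (asymLinearMap n) f s

lemma Asym_mul_of_mem_BField {c : RatField n} (hc : c ∈ BField n) (x : RatField n) :
    Asym n (c * x) = c * Asym n x :=
  (asymLinearMap n).map_smul ⟨c, hc⟩ x

lemma mul_mem_Kspan {c x : RatField n} (hc : c ∈ BField n) (hx : x ∈ Kspan n) :
    c * x ∈ Kspan n :=
  (Kspan n).smul_mem ⟨c, hc⟩ hx

lemma Asym_prod_diag_eq_det {M : Matrix (Fin (n - 1)) (Fin (n - 1)) (RatField n)}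
    (hM : ∀ σ i j, permA n σ (M i j) = M (σ i) j) : Asym n (∏ a, M a a) = M.det := by
  simp [Asym, Matrix.det_apply', hM]

lemma det_updateCol_Xi1_mem_Kspan (h : 0 < n - 1) {r : Fin (n - 1) → ℕ}
    (hr : ∀ a, r a ≤ 2 * n - 1) :
    ((Matrix.of fun i j => Av n i ^ r j).updateCol ⟨0, h⟩ fun i => Xi1 n (Av n i)).det ∈
      Kspan n := by
  set z : Fin (n - 1) := ⟨0, h⟩
  set M := (Matrix.of fun i j => Av n i ^ r j).updateCol z fun i => Xi1 n (Av n i)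
  have hM : ∀ σ i j, permA n σ (M i j) = M (σ i) j := fun σ i j => by
    rcases eq_or_ne j z with rfl | hj
    · simp [M, permA_Xi1, permA_Av]
    · simp [M, hj, permA_Av]
  have hfilter : univ.filter (fun a : Fin (n - 1) => 0 < (a : ℕ)) = univ.erase z := by
    ext a
    simp [z, Fin.ext_iff, Nat.pos_iff_ne_zero]
  refine Submodule.subset_span (Or.inl ⟨h, r, hr, ?_⟩)
  rw [← Asym_prod_diag_eq_det hM, hfilter, ← mul_prod_erase univ _ (mem_univ z)]
  have hdiag : M z z = Xi1 n (Av n z) := by simp [M]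
  have hoff : ∏ a ∈ univ.erase z, M a a = ∏ a ∈ univ.erase z, Av n a ^ r a :=
    prod_congr rfl fun a ha => by simp [M, ne_of_mem_erase ha]
  rw [hdiag, hoff]

end Antisymmetrization

section OddPowerMatrix

variable {N : ℕ}

variable (N) in
/-- For `n = N + 1`, the matrix of the odd powers `A_i^{2n - 1 - 2j}`, `0 ≤ j < n`. The exponents
of the `k`-th monomial in the theorem are those of its columns other than column `k`. -/
noncomputable def oddPowerMatrix : Matrix (Fin N) (Fin (N + 1)) (RatField (N + 1)) :=
  Matrix.of fun i j => Av (N + 1) i ^ (2 * (N + 1) - 1 - 2 * (j : ℕ))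

/-- The maximal minor of `oddPowerMatrix N` that omits column `k`. -/
noncomputable def oddPowerMinor (k : Fin (N + 1)) : RatField (N + 1) :=
  ((oddPowerMatrix N).submatrix id k.succAbove).det

lemma prod_oddPowerMatrix_succAbove (k : Fin (N + 1)) :
    ∏ a, oddPowerMatrix N a (k.succAbove a) =
      (∏ a ∈ univ.filter (fun a : Fin N => (a : ℕ) < k),
        Av (N + 1) a ^ (2 * (N + 1) + 1 - 2 * ((a : ℕ) + 1))) *
      ∏ a ∈ univ.filter (fun a : Fin N => (k : ℕ) ≤ a),
        Av (N + 1) a ^ (2 * (N + 1) - 1 - 2 * ((a : ℕ) + 1)) := by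
  rw [← prod_filter_mul_prod_filter_not univ (fun a : Fin N => (a : ℕ) < k)]
  simp only [not_lt]
  congr 1 <;> refine prod_congr rfl fun a ha => ?_
  · have ha : a.castSucc < k := (mem_filter.1 ha).2
    rw [Fin.succAbove_of_castSucc_lt k a ha, oddPowerMatrix, Matrix.of_apply, Fin.val_castSucc]
    congr 1
    omega
  · have ha : k ≤ a.castSucc := (mem_filter.1 ha).2
    rw [Fin.succAbove_of_le_castSucc k a ha, oddPowerMatrix, Matrix.of_apply, Fin.val_succ]

lemma Asym_prod_oddPowerMatrix_succAbove (k : Fin (N + 1)) :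
    Asym (N + 1) (∏ a, oddPowerMatrix N a (k.succAbove a)) = oddPowerMinor k :=
  Asym_prod_diag_eq_det (M := (oddPowerMatrix N).submatrix id k.succAbove) fun σ i j => by
    simp [oddPowerMatrix, permA_Av]

-- The index type is written `Fin (N + 1 - 1)`, as in `Av`, so that `rw` finds the left-hand side.
lemma Asym_prod_filter_lt_mul_prod_filter_ge (k : Fin (N + 1)) :
    Asym (N + 1) ((∏ a ∈ univ.filter (fun a : Fin (N + 1 - 1) => (a : ℕ) < k),
        Av (N + 1) a ^ (2 * (N + 1) + 1 - 2 * ((a : ℕ) + 1))) *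
      ∏ a ∈ univ.filter (fun a : Fin (N + 1 - 1) => (k : ℕ) ≤ a),
        Av (N + 1) a ^ (2 * (N + 1) - 1 - 2 * ((a : ℕ) + 1))) = oddPowerMinor k :=
  (congrArg _ (prod_oddPowerMatrix_succAbove k).symm).trans (Asym_prod_oddPowerMatrix_succAbove k)

variable (N) in
lemma Asym_prod_odd_pow : Asym (N + 1)
    (∏ a : Fin (N + 1 - 1), Av (N + 1) a ^ (2 * (N + 1) - 1 - 2 * ((a : ℕ) + 1))) =
      oddPowerMinor 0 := by
  simpa using Asym_prod_filter_lt_mul_prod_filter_ge (0 : Fin (N + 1))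

lemma PiB_mul_Xi1_Av (i : Fin N) : PiB (N + 1) * Xi1 (N + 1) (Av (N + 1) i) =
    2 * (oddPowerMatrix N).mulVec (fun j => eB (N + 1) (2 * j + 1)) i := by
  rw [PiB_mul_Xi1, sum_range]
  simp [oddPowerMatrix, Matrix.mulVec, dotProduct, mul_comm]

lemma det_updateCol_mulVec_mem_Kspan [NeZero N] (k : Fin N) :
    (((oddPowerMatrix N).submatrix id k.succ.succAbove).updateCol 0
      ((oddPowerMatrix N).mulVec fun j => eB (N + 1) (2 * j + 1))).det ∈ Kspan (N + 1) := by
  have hgen := det_updateCol_Xi1_mem_Kspan (n := N + 1) (NeZero.pos N)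
    (r := fun a => 2 * (N + 1) - 1 - 2 * (k.succ.succAbove a : ℕ)) fun a => by omega
  have hcoeff : 2⁻¹ * PiB (N + 1) ∈ BField (N + 1) :=
    mul_mem (inv_mem (ofNat_mem _ 2)) (PiB_mem_BField _)
  have hcol : (oddPowerMatrix N).mulVec (fun j => eB (N + 1) (2 * j + 1)) =
      (2⁻¹ * PiB (N + 1)) • fun i => Xi1 (N + 1) (Av (N + 1) i) := by
    ext i
    simp [mul_assoc, PiB_mul_Xi1_Av]
  rw [hcol, Matrix.det_updateCol_smul]
  exact mul_mem_Kspan hcoeff hgen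

lemma oddPowerMinor_sub_mem_Kspan (k : Fin (N + 1)) :
    (-1) ^ (k : ℕ) * (eB (N + 1) 1 * oddPowerMinor k) -
      eB (N + 1) (2 * k + 1) * oddPowerMinor 0 ∈ Kspan (N + 1) := by
  cases k using Fin.cases with
  | zero => simp
  | succ k =>
    have : NeZero N := k.neZero
    have hmem := det_updateCol_mulVec_mem_Kspan k
    rw [det_updateCol_submatrix_succAbove_mulVec] at hmem
    have hsign : (-1 : RatField (N + 1)) ^ ((k : ℕ) + 1) ∈ BField (N + 1) :=
      pow_mem (neg_mem (one_mem _)) _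
    convert mul_mem_Kspan hsign hmem using 1
    have hsq : (-1 : RatField (N + 1)) ^ (k : ℕ) * (-1) ^ (k : ℕ) = 1 := by
      simp [← mul_pow]
    simp only [oddPowerMinor, Fin.val_succ, Fin.val_zero, mul_zero, zero_add, Fin.succAbove_zero]
    linear_combination
      (eB (N + 1) (2 * (k + 1) + 1) * ((oddPowerMatrix N).submatrix id Fin.succ).det) * hsq

end OddPowerMatrix

/-- Rewriting of the cycles of Lukyanov's operator `Λ₋₁(y)`: for `n ≥ 2` and
`l ≥ 0`,
`Asym(e₁·∑_{k=0}^{n−1}(−1)^k·h_{l−2k}·∏_{a=1}^{k}A_a^{2n+1−2a}·∏_{a=k+1}^{n−1}A_a^{2n−1−2a}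
  − ∑_{k=0}^{n−1} e_{2k+1}·h_{l−2k}·∏_{a=1}^{n−1}A_a^{2n−1−2a}) ∈ K`. -/
theorem lukyanov_cycle_rewrite (n : ℕ) (hn : 2 ≤ n) (l : ℕ) :
    Asym n (eOne n *
        (∑ k ∈ Finset.range n, (-1 : RatField n) ^ k * hBInt n ((l : ℤ) - 2 * k) *
          (∏ a ∈ Finset.univ.filter (fun a : Fin (n - 1) => (a : ℕ) < k),
            (Av n a) ^ (2 * n + 1 - 2 * ((a : ℕ) + 1))) *
          (∏ a ∈ Finset.univ.filter (fun a : Fin (n - 1) => k ≤ (a : ℕ)),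
            (Av n a) ^ (2 * n - 1 - 2 * ((a : ℕ) + 1)))) -
      ∑ k ∈ Finset.range n, eB n (2 * k + 1) * hBInt n ((l : ℤ) - 2 * k) *
        ∏ a : Fin (n - 1), (Av n a) ^ (2 * n - 1 - 2 * ((a : ℕ) + 1))) ∈
      Kspan n := by
  obtain ⟨N, rfl⟩ := Nat.exists_eq_add_of_le' (one_le_two.trans hn)
  rw [mul_sum, sum_range, sum_range, ← sum_sub_distrib, Asym_sum]
  refine sum_mem fun k _ => ?_
  have hh := hBInt_mem_BField (N + 1) ((l : ℤ) - 2 * k)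
  have hsign : (-1 : RatField (N + 1)) ^ (k : ℕ) ∈ BField (N + 1) :=
    pow_mem (neg_mem (one_mem _)) _
  have hraised := mul_mem (eB_mem_BField (N + 1) 1) (mul_mem hsign hh)
  have hstair := mul_mem (eB_mem_BField (N + 1) (2 * k + 1)) hh
  rw [Asym_sub, mul_assoc _ (∏ a ∈ _, _) (∏ a ∈ _, _), ← mul_assoc, eOne_eq_eB_one,
    Asym_mul_of_mem_BField hraised, Asym_mul_of_mem_BField hstair,
    Asym_prod_filter_lt_mul_prod_filter_ge, Asym_prod_odd_pow]
  convert mul_mem_Kspan hh (oddPowerMinor_sub_mem_Kspan k) using 1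
  ring
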